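/- Let d ≥ 3, let a₁, …, a_d ∈ ℂ be nonzero complex constants, and let α₁, …, α_d ∈ ℂ[x] be nonzero polynomials satisfying deg α₁ > deg α₂ > deg α₃ ≥ deg α₄ ≥ ⋯ ≥ deg α_d and the non-degeneracy condition that α_i/α_j is not a (nonzero) complex constant for all i ≠ j. Define G_n = a₁·α₁ⁿ + ⋯ + a_d·α_dⁿ ∈ ℂ[x]. If for some n ≥ 0, some integer m > deg α₁, and some polynomial h ∈ ℂ[x] with deg h ≥ 2 one has G_n = h^m, then n ≤ d·(d+1)·(deg α₁ + deg α₂ + ⋯ + deg α_d). -/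

import Mathlib

/-!
Comparing degrees in `G_n = h ^ m` gives `m * deg h = n * deg α₁`, so `n` has to be bounded using
more than the leading term.

If `m < d`, put `r = G_n - a₁ α₁ ^ n`, which has degree at most `n * deg α₁ - n`. The Wronskian of
`α₁ ^ n` and `r` equals that of `α₁ ^ n` and `h ^ m`, hence is divisible by
`α₁ ^ (n - 1) * h ^ (m - 1)`. Comparing degrees yields `n < deg h + deg α₁`, and `deg α₁ < m` turns
this into `n ≤ m * deg α₁`.

If `d ≤ m`, rewrite `h ^ m` as a combination, with nonzero coefficients, of `e ≤ d` linearly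
independent powers `α_i ^ n`, and apply an `(e + 1)`-term Mason–Stothers inequality: the Wronskian
determinant of the powers is nonzero of degree at most the sum of their degrees, but almost
divisible by the product of the powers and `h ^ m`. A common divisor `g` of the `α_i` costs
`n * deg g`, which is at most `n * deg α₁ - n`, and `e ≤ m` controls the radical of `h`.
-/

open Polynomial UniqueFactorizationMonoid

section WronskianMatrix

/-- The matrix whose determinant is the generalized Wronskian of a family of polynomials: the entry
in row `k`, column `i` is the `k`-th derivative of `f i`, rows being numbered from `0`. -/
noncomputable def wronskianMatrix {R : Type*} [Semiring R] {e : ℕ} (f : Fin e → R[X]) :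
    Matrix (Fin e) (Fin e) R[X] :=
  Matrix.of fun k i => derivative^[k] (f i)

variable {R : Type*} [CommRing R] {e : ℕ}

theorem natDegree_det_wronskianMatrix_le (f : Fin e → R[X]) :
    (wronskianMatrix f).det.natDegree ≤ ∑ i, (f i).natDegree := by
  rw [Matrix.det_apply]
  refine natDegree_sum_le_of_forall_le _ _ fun τ _ => ?_
  calc (Equiv.Perm.sign τ • ∏ i, wronskianMatrix f (τ i) i).natDegree
      ≤ (∏ i, wronskianMatrix f (τ i) i).natDegree := natDegree_smul_le _ _
    _ ≤ ∑ i, (wronskianMatrix f (τ i) i).natDegree := natDegree_prod_le _ _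
    _ ≤ ∑ i, (f i).natDegree := Finset.sum_le_sum fun i _ =>
        (natDegree_iterate_derivative _ _).trans (Nat.sub_le _ _)

theorem det_wronskianMatrix_update_sum_smul (f : Fin e → R[X]) (c : Fin e → R) (j : Fin e) :
    (wronskianMatrix (Function.update f j (∑ i, c i • f i))).det =
      C (c j) * (wronskianMatrix f).det := by
  rw [← smul_eq_mul, ← Matrix.det_updateCol_sum (wronskianMatrix f) j fun i => C (c i)]
  congr 1
  ext1 k i
  obtain rfl | hij := eq_or_ne i j
  · simp [wronskianMatrix, iterate_derivative_sum, smul_eq_C_mul]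
  · simp [wronskianMatrix, hij]

end WronskianMatrix

section LinearODE

variable {K : Type*} [Field K] [CharZero K]

theorem eval_iterate_derivative_rootMultiplicity_ne_zero {F : K[X]} (hF : F ≠ 0) (p : K) :
    (derivative^[F.rootMultiplicity p] F).eval p ≠ 0 := by
  rw [eval_iterate_derivative_rootMultiplicity, nsmul_eq_mul]
  exact mul_ne_zero (Nat.cast_ne_zero.mpr (Nat.factorial_ne_zero _))
    (eval_divByMonic_pow_rootMultiplicity_ne_zero p hF)

theorem eq_zero_of_sum_mul_iterate_derivative_eq_zero {N : ℕ} {c : Fin (N + 1) → K[X]} {F : K[X]}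
    {p : K} (hc : (c (Fin.last N)).eval p ≠ 0) (hode : ∑ k, c k * derivative^[k] F = 0)
    (hinit : ∀ k < N, (derivative^[k] F).eval p = 0) : F = 0 := by
  by_contra hF
  set ν := F.rootMultiplicity p
  have hν : (derivative^[ν] F).eval p ≠ 0 := eval_iterate_derivative_rootMultiplicity_ne_zero hF p
  have hNν : N ≤ ν := not_lt.mp fun h => hν (hinit ν h)
  have hdvd_lower (k : Fin N) :
      (X - C p) ^ (ν - N + 1) ∣ c k.castSucc * derivative^[k.castSucc] F :=
    .mul_left ((pow_dvd_pow _ (by simp only [Fin.val_castSucc]; omega)).trans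
      (pow_sub_dvd_iterate_derivative_of_pow_dvd _ (pow_rootMultiplicity_dvd F p))) _
  have hdvd_last : (X - C p) ^ (ν - N + 1) ∣ c (Fin.last N) * derivative^[N] F := by
    rw [Fin.sum_univ_castSucc] at hode
    exact (dvd_add_right (Finset.dvd_sum fun k _ => hdvd_lower k)).mp (hode ▸ dvd_zero _)
  have hcoprime : IsCoprime ((X - C p) ^ (ν - N + 1)) (c (Fin.last N)) := by
    refine IsCoprime.pow_left ?_
    rwa [(irreducible_X_sub_C p).coprime_iff_not_dvd, dvd_iff_isRoot]
  have hdvd : (X - C p) ^ (ν - N + 1 - (ν - N)) ∣ derivative^[ν - N] (derivative^[N] F) :=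
    pow_sub_dvd_iterate_derivative_of_pow_dvd _ (hcoprime.dvd_of_dvd_mul_left hdvd_last)
  rw [Nat.add_sub_cancel_left, pow_one, ← Function.iterate_add_apply, Nat.sub_add_cancel hNν,
    dvd_iff_isRoot] at hdvd
  exact hν hdvd

theorem card_le_order_of_linearIndependent {ι : Type*} [Fintype ι] {f : ι → K[X]}
    (hf : LinearIndependent K f) {N : ℕ} {c : Fin (N + 1) → K[X]} (hc : c (Fin.last N) ≠ 0)
    (hode : ∀ i, ∑ k, c k * derivative^[k] (f i) = 0) : Fintype.card ι ≤ N := by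
  obtain ⟨p, hp⟩ : ∃ p, (c (Fin.last N)).eval p ≠ 0 := by
    by_contra! h
    exact hc (Polynomial.funext (by simpa using h))
  let jet : K[X] →ₗ[K] Fin N → K :=
    LinearMap.pi fun k => (aeval p).toLinearMap ∘ₗ derivative ^ (k : ℕ)
  let operator : K[X] →ₗ[K] K[X] :=
    ∑ k, LinearMap.mulLeft K (c k) ∘ₗ derivative ^ (k : ℕ)
  have hoperator (F : K[X]) : operator F = ∑ k, c k * derivative^[k] F := by
    simp [operator, Module.End.pow_apply]
  have hspan : Submodule.span K (Set.range f) ≤ operator.ker := by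
    rw [Submodule.span_le]
    rintro _ ⟨i, rfl⟩
    simpa [hoperator] using hode i
  have hdisjoint : Disjoint (Submodule.span K (Set.range f)) jet.ker := by
    refine Submodule.disjoint_def.mpr fun F hF hjet => ?_
    refine eq_zero_of_sum_mul_iterate_derivative_eq_zero hp
      (by simpa [hoperator] using hspan hF) fun k hk => ?_
    simpa [jet, Module.End.pow_apply, coe_aeval_eq_eval] using
      congrFun (LinearMap.mem_ker.mp hjet) ⟨k, hk⟩
  simpa using (hf.map hdisjoint).fintype_card_le_finrank

theorem eq_zero_of_forall_sum_mul_iterate_derivative_eq_zero {ι : Type*} [Fintype ι]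
    {f : ι → K[X]} (hf : LinearIndependent K f) {N : ℕ} (hN : N ≤ Fintype.card ι)
    {c : Fin N → K[X]} (hode : ∀ i, ∑ k, c k * derivative^[k] (f i) = 0) : c = 0 := by
  induction N with
  | zero => exact Subsingleton.elim _ _
  | succ N ih =>
    have hlast : c (Fin.last N) = 0 := by
      by_contra hc
      exact absurd (card_le_order_of_linearIndependent hf hc hode) (by omega)
    have hinit : (fun k => c (Fin.castSucc k)) = 0 :=
      ih (by omega) (by simpa [Fin.sum_univ_castSucc, hlast] using hode)
    exact funext (Fin.lastCases hlast (congrFun hinit))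

theorem det_wronskianMatrix_ne_zero {e : ℕ} {f : Fin e → K[X]} (hf : LinearIndependent K f) :
    (wronskianMatrix f).det ≠ 0 := by
  intro hdet
  obtain ⟨c, hc, hrows⟩ := Matrix.exists_vecMul_eq_zero_iff.mpr hdet
  refine hc (eq_zero_of_forall_sum_mul_iterate_derivative_eq_zero hf (by simp) fun i => ?_)
  simpa [Matrix.vecMul, dotProduct, wronskianMatrix] using congrFun hrows i

end LinearODE

section MasonStothers

variable {K : Type*} [Field K] [DecidableEq K]

theorem dvd_iterate_derivative_mul_radical_pow (f : K[X]) (k : ℕ) :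
    f ∣ derivative^[k] f * radical f ^ k := by
  have hderiv : f ∣ radical f * derivative f := by
    conv_lhs => rw [← EuclideanDomain.radical_mul_divRadical (a := f)]
    exact mul_dvd_mul_left _ (divRadical_dvd_derivative f)
  have hderiv_of_dvd {P : K[X]} (hP : f ∣ P) : f ∣ radical f * derivative P := by
    obtain ⟨q, rfl⟩ := hP
    rw [derivative_mul, mul_add, ← mul_assoc, mul_left_comm]
    exact dvd_add (hderiv.mul_right q) (dvd_mul_right _ _)
  induction k with
  | zero => simp
  | succ k ih =>
    have hleibniz : derivative^[k + 1] f * radical f ^ (k + 1) =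
        radical f * derivative (derivative^[k] f * radical f ^ k) -
          derivative^[k] f * radical f ^ k * (k * derivative (radical f)) := by
      rcases k with _ | k
      · simp [mul_comm]
      · simp only [Function.iterate_succ_apply', derivative_mul, derivative_pow_succ, map_add,
          map_natCast, map_one, Nat.cast_add, Nat.cast_one]
        ring
    rw [hleibniz]
    exact dvd_sub (hderiv_of_dvd ih) (ih.mul_right _)

theorem prod_dvd_det_wronskianMatrix_mul {e : ℕ} (f : Fin e → K[X]) :
    ∏ i, f i ∣ (wronskianMatrix f).det * (∏ i, radical (f i)) ^ (e - 1) := by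
  rw [Matrix.det_apply, Finset.sum_mul]
  refine Finset.dvd_sum fun τ _ => ?_
  rw [Units.smul_def, smul_mul_assoc, ← Finset.prod_pow, ← Finset.prod_mul_distrib, zsmul_eq_mul]
  refine Dvd.dvd.mul_left (Finset.prod_dvd_prod_of_dvd _ _ fun i _ => ?_) _
  exact (dvd_iterate_derivative_mul_radical_pow (f i) (τ i)).trans
    (mul_dvd_mul_left _ (pow_dvd_pow _ (by omega)))

theorem sum_smul_mul_prod_dvd {e : ℕ} {f : Fin e → K[X]} {c : Fin e → K} (hc : ∀ i, c i ≠ 0)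
    {G : K[X]} (hG : G ∈ Ideal.span (Set.range f)) :
    (∑ i, c i • f i) * ∏ i, f i ∣ G * ((wronskianMatrix f).det *
      (radical (∑ i, c i • f i) * ∏ i, radical (f i)) ^ (e - 1)) := by
  set F := ∑ i, c i • f i
  set Z := (wronskianMatrix f).det * (radical F * ∏ i, radical (f i)) ^ (e - 1)
  have hprod (φ : K[X] → K[X]) (j : Fin e) :
      ∏ i, φ (Function.update f j F i) = φ F * ∏ i ∈ Finset.univ.erase j, φ (f i) := by
    rw [← Finset.mul_prod_erase _ _ (Finset.mem_univ j), Function.update_self]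
    congr 1
    exact Finset.prod_congr rfl fun i hi => by
      rw [Function.update_of_ne (Finset.ne_of_mem_erase hi)]
  have hreplace (j : Fin e) : F * ∏ i ∈ Finset.univ.erase j, f i ∣ Z := by
    have hdvd := prod_dvd_det_wronskianMatrix_mul (Function.update f j F)
    rw [hprod (fun q => q), hprod radical, det_wronskianMatrix_update_sum_smul, mul_assoc,
      (isUnit_C.mpr (hc j).isUnit).dvd_mul_left] at hdvd
    refine hdvd.trans (mul_dvd_mul_left _ (pow_dvd_pow_of_dvd (mul_dvd_mul_left _ ?_) _))
    exact Finset.prod_dvd_prod_of_subset _ _ _ (Finset.erase_subset _ _)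
  obtain ⟨u, rfl⟩ := Ideal.mem_span_range_iff_exists_fun.mp hG
  rw [Finset.sum_mul (a := Z)]
  refine Finset.dvd_sum fun j _ => ?_
  rw [← Finset.mul_prod_erase _ _ (Finset.mem_univ j), mul_left_comm, mul_assoc (u j)]
  exact (mul_dvd_mul_left _ (hreplace j)).mul_left _

/-- A Mason–Stothers inequality with many terms. For coprime `f i` one can take `G = 1`. -/
theorem natDegree_sum_smul_le [CharZero K] {e : ℕ} {f : Fin e → K[X]}
    (hf : LinearIndependent K f) {c : Fin e → K} (hc : ∀ i, c i ≠ 0) {G : K[X]} (hG₀ : G ≠ 0)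
    (hG : G ∈ Ideal.span (Set.range f)) :
    (∑ i, c i • f i).natDegree ≤ G.natDegree +
      (e - 1) * ((radical (∑ i, c i • f i)).natDegree + ∑ i, (radical (f i)).natDegree) := by
  set F := ∑ i, c i • f i
  obtain hF | hF := eq_or_ne F 0
  · simp [hF]
  have hW := det_wronskianMatrix_ne_zero hf
  have hprod : ∏ i, f i ≠ 0 := Finset.prod_ne_zero_iff.mpr fun i _ => hf.ne_zero i
  have hrad : ∏ i, radical (f i) ≠ 0 := Finset.prod_ne_zero_iff.mpr fun i _ => radical_ne_zero
  have hpow : (radical F * ∏ i, radical (f i)) ^ (e - 1) ≠ 0 :=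
    pow_ne_zero _ (mul_ne_zero radical_ne_zero hrad)
  have hdvd := natDegree_le_of_dvd (sum_smul_mul_prod_dvd hc hG)
    (mul_ne_zero hG₀ (mul_ne_zero hW hpow))
  rw [natDegree_mul hF hprod, natDegree_mul hG₀ (mul_ne_zero hW hpow), natDegree_mul hW hpow,
    natDegree_pow, natDegree_mul radical_ne_zero hrad, natDegree_prod _ _ fun i _ => hf.ne_zero i,
    natDegree_prod _ _ fun i _ => radical_ne_zero] at hdvd
  have := natDegree_det_wronskianMatrix_le f
  omega

end MasonStothers

section Davenport

variable {K : Type*} [Field K] [CharZero K]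

theorem wronskian_ne_zero_of_natDegree_ne {f g : K[X]} (hf : f ≠ 0) (hg : g ≠ 0)
    (hdeg : f.natDegree ≠ g.natDegree) : wronskian f g ≠ 0 := by
  intro hw
  have hlead := congrArg leadingCoeff (sub_eq_zero.mp hw)
  simp only [leadingCoeff_mul, leadingCoeff_derivative] at hlead
  have hcast : (g.natDegree : K) = f.natDegree :=
    mul_left_cancel₀ (mul_ne_zero (leadingCoeff_ne_zero.mpr hf) (leadingCoeff_ne_zero.mpr hg))
      (by linear_combination hlead)
  exact hdeg (by exact_mod_cast hcast.symm)

theorem pow_sub_one_mul_pow_sub_one_dvd_wronskian {R : Type*} [CommRing R] (f g : R[X])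
    (m n : ℕ) : f ^ (m - 1) * g ^ (n - 1) ∣ wronskian (f ^ m) (g ^ n) := by
  rw [wronskian, derivative_pow, derivative_pow]
  refine dvd_sub ?_ ?_
  · exact mul_dvd_mul (pow_dvd_pow _ (Nat.sub_le _ _)) ((dvd_mul_left _ _).mul_right _)
  · exact mul_dvd_mul ((dvd_mul_left _ _).mul_right _) (pow_dvd_pow _ (Nat.sub_le _ _))

/-- A variant of Davenport's inequality for `deg (h ^ m - a * f ^ n)`. -/
theorem natDegree_lt_of_smul_pow_add_eq_pow {f r h : K[X]} {a : K} {n m : ℕ} (hf : f ≠ 0)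
    (hr : r ≠ 0) (hrdeg : r.natDegree ≠ n * f.natDegree) (heq : a • f ^ n + r = h ^ m) :
    (m - 1) * h.natDegree < r.natDegree + f.natDegree := by
  have hwne : wronskian (f ^ n) r ≠ 0 :=
    wronskian_ne_zero_of_natDegree_ne (pow_ne_zero n hf) hr
      (by rw [natDegree_pow]; exact hrdeg.symm)
  have hw : wronskian (f ^ n) (h ^ m) = wronskian (f ^ n) r := by
    rw [← heq, wronskian_add_right, ← wronskianBilin_apply, map_smul, wronskianBilin_apply,
      wronskian_self_eq_zero, smul_zero, zero_add]
  have hdvd : f ^ (n - 1) * h ^ (m - 1) ∣ wronskian (f ^ n) r :=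
    hw ▸ pow_sub_one_mul_pow_sub_one_dvd_wronskian f h n m
  have hne := ne_zero_of_dvd_ne_zero hwne hdvd
  have hle := natDegree_le_of_dvd hdvd hwne
  rw [natDegree_mul (left_ne_zero_of_mul hne) (right_ne_zero_of_mul hne), natDegree_pow,
    natDegree_pow] at hle
  have hlt := natDegree_wronskian_lt_add hwne
  rw [natDegree_pow] at hlt
  have hn : n * f.natDegree ≤ (n - 1) * f.natDegree + f.natDegree := by
    rw [← Nat.succ_mul]
    exact Nat.mul_le_mul_right _ (by omega)
  omega

theorem le_mul_natDegree_of_smul_pow_add_eq_pow {f r h : K[X]} {a : K} {n m : ℕ} (hr : r ≠ 0)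
    (hm : f.natDegree < m) (hrdeg : r.natDegree + n ≤ n * f.natDegree)
    (hdeg : m * h.natDegree = n * f.natDegree) (heq : a • f ^ n + r = h ^ m) :
    n ≤ m * f.natDegree := by
  obtain rfl | hn := eq_or_ne n 0
  · exact Nat.zero_le _
  have hf : f ≠ 0 := by
    rintro rfl
    simp only [natDegree_zero, mul_zero] at hrdeg
    omega
  have hdavenport := natDegree_lt_of_smul_pow_add_eq_pow hf hr (by omega) heq
  obtain ⟨m, rfl⟩ := Nat.exists_eq_add_one_of_ne_zero (Nat.ne_zero_of_lt hm)
  rw [Nat.add_sub_cancel] at hdavenport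
  have hlt : n < h.natDegree + f.natDegree := by
    rw [add_one_mul] at hdeg
    omega
  nlinarith [Nat.mul_le_mul_left (m + 1) hlt, Nat.mul_le_mul_left n hm]

end Davenport

section CommonDivisor

theorem pow_mem_span_range_pow {R ι : Type*} [CommRing R] [IsDomain R] [Finite ι] {α : ι → R}
    {g : R} (hg : g ≠ 0) (hspan : Ideal.span (Set.range α) = Ideal.span {g}) (n : ℕ) :
    g ^ n ∈ Ideal.span (Set.range fun i => α i ^ n) := by
  cases nonempty_fintype ι
  have hdvd (i : ι) : g ∣ α i :=
    Ideal.mem_span_singleton.mp (hspan ▸ Ideal.subset_span (Set.mem_range_self i))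
  choose β hβ using hdvd
  have hβtop : Ideal.span (Set.range β) = ⊤ := by
    obtain ⟨u, hu⟩ := Ideal.mem_span_range_iff_exists_fun.mp
      (hspan ▸ Ideal.mem_span_singleton_self g : g ∈ Ideal.span (Set.range α))
    rw [Ideal.eq_top_iff_one, Ideal.mem_span_range_iff_exists_fun]
    refine ⟨u, mul_left_cancel₀ hg ?_⟩
    calc g * ∑ i, u i * β i = ∑ i, u i * α i := by
          simp only [hβ, Finset.mul_sum, mul_left_comm]
      _ = g * 1 := by rw [hu, mul_one]
  have hβpow := Ideal.span_pow_eq_top _ hβtop n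
  rw [← Set.range_comp, Ideal.eq_top_iff_one, Ideal.mem_span_range_iff_exists_fun] at hβpow
  obtain ⟨u, hu⟩ := hβpow
  refine Ideal.mem_span_range_iff_exists_fun.mpr ⟨u, ?_⟩
  calc ∑ i, u i * α i ^ n = g ^ n * ∑ i, u i * β i ^ n := by
        simp only [hβ, mul_pow, Finset.mul_sum, mul_left_comm]
    _ = g ^ n := by rw [← mul_one (g ^ n)]; simpa using congrArg (g ^ n * ·) hu

theorem exists_mul_eq_dvd_isCoprime_of_squarefree {R : Type*} [EuclideanDomain R] {u : R}
    (hu : Squarefree u) (g : R) : ∃ v w, u = v * w ∧ v ∣ g ∧ IsCoprime w g := by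
  classical
  obtain ⟨w, hw⟩ := EuclideanDomain.gcd_dvd_left u g
  refine ⟨_, w, hw, EuclideanDomain.gcd_dvd_right u g, IsRelPrime.isCoprime fun p hpw hpg => ?_⟩
  rw [hw] at hu
  exact (squarefree_mul_iff.mp hu).1
    (EuclideanDomain.dvd_gcd (hw ▸ hpw.mul_left _) hpg) hpw

variable {K : Type*} [Field K]

theorem pow_mul_radical_pow_dvd [DecidableEq K] {g h : K[X]} {n m e : ℕ} (hem : e ≤ m)
    (hgh : g ^ n ∣ h ^ m) : g ^ n * radical h ^ e ∣ h ^ m * g ^ e := by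
  obtain ⟨v, w, hvw, hvg, hwg⟩ :=
    exists_mul_eq_dvd_isCoprime_of_squarefree (squarefree_radical (a := h)) g
  have hwh : w ^ e ∣ h ^ m := (pow_dvd_pow_of_dvd
    ((Dvd.intro_left v hvw.symm).trans radical_dvd_self) e).trans (pow_dvd_pow h hem)
  rw [hvw, mul_pow, mul_left_comm, mul_comm]
  exact mul_dvd_mul (hwg.symm.pow.mul_dvd hgh hwh) (pow_dvd_pow_of_dvd hvg e)

theorem mul_natDegree_radical_le [DecidableEq K] {g h : K[X]} {n m e : ℕ} (hg : g ≠ 0) (hh : h ≠ 0)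
    (hem : e ≤ m) (hgh : g ^ n ∣ h ^ m) :
    n * g.natDegree + e * (radical h).natDegree ≤ m * h.natDegree + e * g.natDegree := by
  have hle := natDegree_le_of_dvd (pow_mul_radical_pow_dvd hem hgh)
    (mul_ne_zero (pow_ne_zero m hh) (pow_ne_zero e hg))
  rwa [natDegree_mul (pow_ne_zero n hg) (pow_ne_zero e radical_ne_zero),
    natDegree_mul (pow_ne_zero m hh) (pow_ne_zero e hg), natDegree_pow, natDegree_pow,
    natDegree_pow, natDegree_pow] at hle

theorem natDegree_radical_pow_le [DecidableEq K] (f : K[X]) (n : ℕ) :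
    (radical (f ^ n)).natDegree ≤ f.natDegree :=
  (natDegree_le_of_dvd radical_pow_dvd radical_ne_zero).trans natDegree_radical_le

end CommonDivisor

section PowerSums

variable {K : Type*} [Field K]

theorem mul_natDegree_le_of_sum_smul_pow_eq [CharZero K] [DecidableEq K] {e n m : ℕ}
    {α : Fin e → K[X]} {c : Fin e → K} {g h : K[X]} (hli : LinearIndependent K fun i => α i ^ n)
    (hc : ∀ i, c i ≠ 0) (hg : g ≠ 0) (hspan : Ideal.span (Set.range α) = Ideal.span {g})
    (heq : ∑ i, c i • α i ^ n = h ^ m) :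
    m * h.natDegree ≤
      n * g.natDegree + (e - 1) * ((radical h).natDegree + ∑ i, (α i).natDegree) := by
  have hmason :=
    natDegree_sum_smul_le hli hc (pow_ne_zero n hg) (pow_mem_span_range_pow hg hspan n)
  rw [heq, natDegree_pow, natDegree_pow] at hmason
  refine hmason.trans (Nat.add_le_add_left (Nat.mul_le_mul_left _ (add_le_add ?_ ?_)) _)
  · exact natDegree_le_of_dvd radical_pow_dvd radical_ne_zero
  · exact Finset.sum_le_sum fun i _ => natDegree_radical_pow_le (α i) n

theorem le_mul_sum_natDegree_of_linearIndependent [CharZero K] {e n m : ℕ} {α : Fin e → K[X]}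
    {c : Fin e → K} {h : K[X]} (hli : LinearIndependent K fun i => α i ^ n) (hc : ∀ i, c i ≠ 0)
    {j₀ j₁ : Fin e} (hlt : (α j₁).natDegree < (α j₀).natDegree) (hem : e ≤ m)
    (hdeg : m * h.natDegree = n * (α j₀).natDegree) (heq : ∑ i, c i • α i ^ n = h ^ m) :
    n ≤ (e - 1) * (e + 1) * ∑ i, (α i).natDegree := by
  classical
  obtain rfl | hn := eq_or_ne n 0
  · exact Nat.zero_le _
  have hh : h ≠ 0 := by
    rintro rfl
    rw [natDegree_zero, mul_zero] at hdeg
    exact mul_ne_zero hn (Nat.ne_zero_of_lt hlt) hdeg.symm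
  have hα (i : Fin e) : α i ≠ 0 := fun hi => hli.ne_zero i (by simp [hi, hn])
  obtain ⟨g, hI : Ideal.span (Set.range α) = Ideal.span {g}⟩ :=
    (IsPrincipalIdealRing.principal (Ideal.span (Set.range α))).principal
  have hgα (i : Fin e) : g ∣ α i :=
    Ideal.mem_span_singleton.mp (hI ▸ Ideal.subset_span (Set.mem_range_self i))
  have hg : g ≠ 0 := ne_zero_of_dvd_ne_zero (hα j₀) (hgα j₀)
  have hgdeg (i : Fin e) : g.natDegree ≤ (α i).natDegree := natDegree_le_of_dvd (hgα i) (hα i)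
  have hgsum : e * g.natDegree ≤ ∑ i, (α i).natDegree := by
    simpa using Finset.card_nsmul_le_sum Finset.univ _ _ fun i _ => hgdeg i
  have hgh : g ^ n ∣ h ^ m := by
    rw [← heq]
    refine Finset.dvd_sum fun i _ => ?_
    rw [smul_eq_C_mul]
    exact (pow_dvd_pow_of_dvd (hgα i) n).mul_left _
  have hradh := mul_natDegree_radical_le hg hh hem hgh
  have hmason := mul_natDegree_le_of_sum_smul_pow_eq hli hc hg hI heq
  rw [hdeg] at hradh hmason
  obtain ⟨k, rfl⟩ : ∃ k, e = k + 1 := ⟨e - 1, by have := j₀.isLt; omega⟩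
  rw [Nat.add_sub_cancel] at hmason ⊢
  have hgj₀ : n * g.natDegree + n ≤ n * (α j₀).natDegree :=
    Nat.mul_le_mul_left n ((hgdeg j₁).trans_lt hlt)
  -- Scaling `hmason` by `e = k + 1` lets `hradh` eliminate `e * deg (rad h)`.
  nlinarith [Nat.mul_le_mul_left k hgsum, Nat.mul_le_mul_left k hradh,
    Nat.mul_le_mul_left (k + 1) hmason]

theorem degree_sum_smul_pow_lt {ι : Type*} {s : Finset ι} {a : ι → K} {α : ι → K[X]} {n D : ℕ}
    (hn : n ≠ 0) (hlt : ∀ i ∈ s, (α i).natDegree < D) :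
    (∑ i ∈ s, a i • α i ^ n).degree < (n * D : ℕ) := by
  refine (degree_sum_le _ _).trans_lt <|
    (Finset.sup_lt_iff (WithBot.bot_lt_coe _)).mpr fun i hi => ?_
  calc (a i • α i ^ n).degree ≤ (α i ^ n).degree := degree_smul_le _ _
    _ ≤ (α i ^ n).natDegree := degree_le_natDegree
    _ < (n * D : ℕ) := by
      rw [natDegree_pow]
      exact_mod_cast Nat.mul_lt_mul_of_pos_left (hlt i hi) (Nat.pos_of_ne_zero hn)

theorem degree_sum_smul_pow_eq {ι : Type*} {s : Finset ι} {a : ι → K} {α : ι → K[X]} {n : ℕ}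
    {j : ι} (hn : n ≠ 0) (hj : j ∈ s) (ha : a j ≠ 0) (hα : α j ≠ 0)
    (hlt : ∀ i ∈ s, i ≠ j → (α i).natDegree < (α j).natDegree) :
    (∑ i ∈ s, a i • α i ^ n).degree = (n * (α j).natDegree : ℕ) := by
  classical
  have hlead : (a j • α j ^ n).degree = (n * (α j).natDegree : ℕ) := by
    rw [smul_eq_C_mul, degree_C_mul ha, degree_eq_natDegree (pow_ne_zero n hα), natDegree_pow]
  rw [← Finset.add_sum_erase _ _ hj, degree_add_eq_left_of_degree_lt, hlead]
  rw [hlead]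
  exact degree_sum_smul_pow_lt hn fun i hi =>
    hlt i (Finset.mem_of_mem_erase hi) (Finset.ne_of_mem_erase hi)

theorem exists_linearIndependent_sum_smul_eq {V ι : Type*} [AddCommGroup V] [Module K V]
    {v : ι → V} {x : V} (hx : x ∈ Submodule.span K (Set.range v)) :
    ∃ (e : ℕ) (σ : Fin e ↪ ι) (c : Fin e → K), LinearIndependent K (v ∘ σ) ∧ (∀ i, c i ≠ 0) ∧
      ∑ i, c i • v (σ i) = x := by
  obtain ⟨κ, τ, hτ, hspan, hli⟩ := exists_linearIndependent' K v
  rw [← hspan] at hx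
  obtain ⟨c, rfl⟩ := Finsupp.mem_span_range_iff_exists_finsupp.mp hx
  let E := c.support.equivFin.symm
  refine ⟨c.support.card, ⟨fun i => τ (E i), hτ.comp (Subtype.val_injective.comp E.injective)⟩,
    fun i => c (E i), hli.comp _ (Subtype.val_injective.comp E.injective),
    fun i => Finsupp.mem_support_iff.mp (E i).2, ?_⟩
  calc ∑ i, c (E i) • v (τ (E i)) = ∑ k : c.support, c k • v (τ k) :=
        E.sum_comp fun k : c.support => c k • v (τ k)
    _ = c.sum fun k b => b • (v ∘ τ) k := c.support.sum_coe_sort fun k => c k • v (τ k)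

theorem le_mul_sum_natDegree_of_card_le [CharZero K] {ι : Type*} [Fintype ι] {α : ι → K[X]} {i₀ : ι}
    {a : K} {r h : K[X]} {n m : ℕ} (hlt : ∀ i ≠ i₀, (α i).natDegree < (α i₀).natDegree)
    (hcard : Fintype.card ι ≤ m) (hr : r ≠ 0) (hrdeg : r.natDegree ≠ n * (α i₀).natDegree)
    (hdegree : (h ^ m).degree = (n * (α i₀).natDegree : ℕ)) (heq : a • α i₀ ^ n + r = h ^ m)
    (hspan : h ^ m ∈ Submodule.span K (Set.range fun i => α i ^ n)) :
    n ≤ Fintype.card ι * (Fintype.card ι + 1) * ∑ i, (α i).natDegree := by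
  obtain rfl | hn := eq_or_ne n 0
  · exact Nat.zero_le _
  obtain ⟨e, σ, c, hli, hc, hsum⟩ := exists_linearIndependent_sum_smul_eq hspan
  obtain ⟨j₀, rfl⟩ : ∃ j₀, σ j₀ = i₀ := by
    by_contra! hne
    have hdegree_lt := degree_sum_smul_pow_lt (s := Finset.univ) (a := c) (α := α ∘ σ) hn
      fun j _ => hlt _ (hne j)
    exact (hdegree ▸ hsum ▸ hdegree_lt).ne rfl
  obtain ⟨j₁, hj₁⟩ : ∃ j₁, j₁ ≠ j₀ := by
    by_contra! hall
    rw [Fintype.sum_eq_single j₀ fun j hj => absurd (hall j) hj, ← heq] at hsum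
    have hr_eq : r = (c j₀ - a) • α (σ j₀) ^ n := by rw [sub_smul, hsum, add_sub_cancel_left]
    have hca : c j₀ - a ≠ 0 := by
      intro hca
      exact hr (by rw [hr_eq, hca, zero_smul])
    exact hrdeg (by rw [hr_eq, natDegree_smul _ hca, natDegree_pow])
  have hecard : e ≤ Fintype.card ι := by simpa using Fintype.card_le_of_embedding σ
  have hbound := le_mul_sum_natDegree_of_linearIndependent (α := α ∘ σ) hli hc
    (hlt _ (σ.injective.ne hj₁)) (hecard.trans hcard)
    (by rw [← natDegree_pow]; exact natDegree_eq_of_degree_eq_some hdegree) hsum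
  have hsum_le : ∑ j, (α (σ j)).natDegree ≤ ∑ i, (α i).natDegree := by
    rw [← Finset.sum_map Finset.univ σ fun i => (α i).natDegree]
    exact Finset.sum_le_sum_of_subset (Finset.subset_univ _)
  exact hbound.trans (Nat.mul_le_mul (Nat.mul_le_mul (by omega) (by omega)) hsum_le)

end PowerSums

theorem stmt4_general {K : Type*} [Field K] [CharZero K] {ι : Type*} [Fintype ι]
    (a : ι → K) (α : ι → K[X]) (i₀ i₁ : ι) (ha₀ : a i₀ ≠ 0) (ha₁ : a i₁ ≠ 0) (hα₁ : α i₁ ≠ 0)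
    (h₀₁ : (α i₁).natDegree < (α i₀).natDegree)
    (hrest : ∀ i, i ≠ i₀ → i ≠ i₁ → (α i).natDegree < (α i₁).natDegree)
    (n m : ℕ) (hm : (α i₀).natDegree < m) (h : K[X]) (heq : ∑ i, C (a i) * α i ^ n = h ^ m) :
    n ≤ Fintype.card ι * (Fintype.card ι + 1) * ∑ i, (α i).natDegree := by
  classical
  obtain rfl | hn := eq_or_ne n 0
  · exact Nat.zero_le _
  simp only [← smul_eq_C_mul] at heq
  have hlt (i : ι) (hi : i ≠ i₀) : (α i).natDegree < (α i₀).natDegree := by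
    obtain rfl | hi₁ := eq_or_ne i i₁
    exacts [h₀₁, (hrest i hi hi₁).trans h₀₁]
  have hdegree : (h ^ m).degree = (n * (α i₀).natDegree : ℕ) :=
    heq ▸ degree_sum_smul_pow_eq hn (Finset.mem_univ i₀) ha₀ (ne_zero_of_natDegree_gt h₀₁)
      fun i _ => hlt i
  have hne : i₁ ≠ i₀ := by
    rintro rfl
    exact h₀₁.false
  set r := ∑ i ∈ Finset.univ.erase i₀, a i • α i ^ n
  have hrdegree : r.degree = (n * (α i₁).natDegree : ℕ) :=
    degree_sum_smul_pow_eq hn (Finset.mem_erase.mpr ⟨hne, Finset.mem_univ i₁⟩) ha₁ hα₁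
      fun i hi => hrest i (Finset.ne_of_mem_erase hi)
  have hr : r ≠ 0 := degree_ne_bot.mp (hrdegree ▸ WithBot.coe_ne_bot)
  have hrdeg : r.natDegree + n ≤ n * (α i₀).natDegree :=
    natDegree_eq_of_degree_eq_some hrdegree ▸ Nat.mul_le_mul_left n h₀₁
  have hsplit : a i₀ • α i₀ ^ n + r = h ^ m :=
    heq ▸ Finset.add_sum_erase _ _ (Finset.mem_univ i₀)
  obtain hcard | hcard := le_or_gt (Fintype.card ι) m
  · exact le_mul_sum_natDegree_of_card_le hlt hcard hr (by omega) hdegree hsplit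
      (Submodule.mem_span_range_iff_exists_fun K |>.mpr ⟨a, heq⟩)
  · calc n ≤ m * (α i₀).natDegree := le_mul_natDegree_of_smul_pow_add_eq_pow hr hm hrdeg
          (by rw [← natDegree_pow]; exact natDegree_eq_of_degree_eq_some hdegree) hsplit
      _ ≤ Fintype.card ι * (Fintype.card ι + 1) * ∑ i, (α i).natDegree := by
        refine Nat.mul_le_mul (by nlinarith) ?_
        exact Finset.single_le_sum (f := fun i => (α i).natDegree) (by simp) (Finset.mem_univ i₀)

/-- **Explicit index bound in the general case.**
Under the hypotheses of Theorem 2, if `∑ i, a i · (α i)^n = h^m` with `m > deg α₀` and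
`deg h ≥ 2`, then `n ≤ d(d+1)·(deg α₀ + ⋯ + deg α_{d-1})`. -/
theorem stmt4 (d : ℕ) (hd : 3 ≤ d)
    (a : Fin d → ℂ) (ha : ∀ i, a i ≠ 0)
    (α : Fin d → Polynomial ℂ) (hα : ∀ i, α i ≠ 0)
    (hdeg12 : (α ⟨1, by omega⟩).natDegree < (α ⟨0, by omega⟩).natDegree)
    (hdeg23 : (α ⟨2, by omega⟩).natDegree < (α ⟨1, by omega⟩).natDegree)
    (hdegmono : ∀ i j : Fin d, 2 ≤ (i : ℕ) → i ≤ j → (α j).natDegree ≤ (α i).natDegree)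
    (hnondeg : ∀ i j : Fin d, i ≠ j → ∀ c : ℂ, c ≠ 0 → α i ≠ Polynomial.C c * α j)
    (n m : ℕ) (hm : (α ⟨0, by omega⟩).natDegree < m)
    (h : Polynomial ℂ) (hh : 2 ≤ h.natDegree)
    (heq : ∑ i, Polynomial.C (a i) * (α i) ^ n = h ^ m) :
    n ≤ d * (d + 1) * ∑ i, (α i).natDegree := by
  have hrest (i : Fin d) (h0 : i ≠ ⟨0, by omega⟩) (h1 : i ≠ ⟨1, by omega⟩) :
      (α i).natDegree < (α ⟨1, by omega⟩).natDegree := by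
    have hi : 2 ≤ (i : ℕ) := by grind
    exact (hdegmono ⟨2, by omega⟩ i le_rfl hi).trans_lt hdeg23
  simpa using stmt4_general a α _ _ (ha _) (ha _) (hα _) hdeg12 hrest n m hm h heq
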